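/- arXiv:1501.06452 — 2 statements merged into one kernel-verified Lean document; each statement's English description precedes it below -/
import Mathlib

section
/- Let X be a sequential topological space that is sequentially Hausdorff. Let (H_n)_{n∈ℕ} be a sequence of nonempty ω-Scott open subsets of O(X) converging to a nonempty ω-Scott open set H_∞ with respect to the ω-Scott topology on O(O(X)), and let (x_n) be a sequence in X with x_n ∈ ⋂H_n for all n ∈ ℕ. Then (x_n) has a subsequence converging to some element x_∞ ∈ ⋂H_∞. -/
/-!
Membership `U ∈ H` is an ω-Scott open condition on `H`, so every `U ∈ H∞` contains `xₙ` for all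
large `n`. Hence (`exists_mem_of_frequently`) a decreasing sequence of closed sets `C k`, each of
which is visited infinitely often by `(xₙ)`, has a common point in every `U ∈ H∞`: otherwise the
open sets `U \ C k` increase to `U`, so one of them belongs to `H∞` and eventually contains `xₙ`.

If `(xₙ)` had no convergent subsequence, its tails `{xₙ | n ≥ k}` would be sequentially closed,
hence closed (`isClosed_tail_union`); a common point of the tails, which exists since
`H∞` is nonempty, is a value taken infinitely often, and this gives a constant subsequence. So some subsequence converges to a point
`x∞`. If `x∞ ∉ U` for some `U ∈ H∞`, the closed sets `{x_{φ n} | n ≥ k} ∪ {x∞}` have a common point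
in `U`; it is a value which the subsequence takes infinitely often, so it equals `x∞` by uniqueness
of limits, a contradiction.
-/

open TopologicalSpace Filter Set

/-- A subset `H` of a complete lattice is **ω-Scott open** if it is upward closed and every
nonempty countable directed family `D` whose supremum belongs to `H` meets `H`. -/
def OmegaScottOpen {L : Type*} [CompleteLattice L] (H : Set L) : Prop :=
  (∀ ⦃U V : L⦄, U ∈ H → U ≤ V → V ∈ H) ∧
  ∀ D : Set L, D.Nonempty → D.Countable → DirectedOn (· ≤ ·) D → sSup D ∈ H →
    (D ∩ H).Nonempty

/-- A subset `H` of a complete lattice is **Scott open** if it is upward closed and every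
nonempty directed family `D` whose supremum belongs to `H` meets `H`. -/
def ScottOpen {L : Type*} [CompleteLattice L] (H : Set L) : Prop :=
  (∀ ⦃U V : L⦄, U ∈ H → U ≤ V → V ∈ H) ∧
  ∀ D : Set L, D.Nonempty → DirectedOn (· ≤ ·) D → sSup D ∈ H → (D ∩ H).Nonempty

/-- The ω-Scott topology on a complete lattice: the collection of ω-Scott open sets (these form a
topology, so it coincides with the topology they generate). -/
def omegaScottTopology (L : Type*) [CompleteLattice L] : TopologicalSpace L :=
  .generateFrom {H | OmegaScottOpen H}

/-- The Scott topology on a complete lattice. -/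
def scottTopology' (L : Type*) [CompleteLattice L] : TopologicalSpace L :=
  .generateFrom {H | ScottOpen H}

/-- A set `K` is countably compact if every countable open cover of `K` has a finite subcover. -/
def CountablyCompactSet {X : Type*} [TopologicalSpace X] (K : Set X) : Prop :=
  ∀ C : Set (Set X), C.Countable → (∀ c ∈ C, IsOpen c) → K ⊆ ⋃₀ C →
    ∃ F ⊆ C, F.Finite ∧ K ⊆ ⋃₀ F

/-- The compact-open topology on the lattice of opens of `X`, generated by the sets
`K^⊆ = {U | K ⊆ U}` for `K` compact. -/
def coTopology (X : Type*) [TopologicalSpace X] : TopologicalSpace (Opens X) :=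
  .generateFrom {H | ∃ K : Set X, IsCompact K ∧ H = {U : Opens X | K ⊆ (U : Set X)}}

/-- The countably-compact-open topology on the lattice of opens of `X`. -/
def ccoTopology (X : Type*) [TopologicalSpace X] : TopologicalSpace (Opens X) :=
  .generateFrom
    {H | ∃ K : Set X, CountablyCompactSet K ∧ H = {U : Opens X | K ⊆ (U : Set X)}}

/-- A topological space is sequentially Hausdorff if limits of sequences are unique. -/
def SeqHausdorff (X : Type*) [TopologicalSpace X] : Prop :=
  ∀ (x : ℕ → X) (a b : X), Tendsto x atTop (nhds a) → Tendsto x atTop (nhds b) → a = b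

/-- `OO X` is the lattice of ω-Scott open subsets of `O(X)`, i.e. the opens of `O(X)`. -/
def OO (X : Type*) [TopologicalSpace X] : Type _ := {H : Set (Opens X) // OmegaScottOpen H}

namespace OO

variable {X : Type*} [TopologicalSpace X]

lemma omegaScottOpen_sUnion {S : Set (Set (Opens X))} (hS : ∀ s ∈ S, OmegaScottOpen s) :
    OmegaScottOpen (⋃₀ S) := by
  constructor
  · rintro U V ⟨s, hs, hU⟩ hUV
    exact ⟨s, hs, (hS s hs).1 hU hUV⟩
  · rintro D hne hcnt hdir hsup
    obtain ⟨s, hs, hU⟩ := hsup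
    obtain ⟨d, hdD, hds⟩ := (hS s hs).2 D hne hcnt hdir hU
    exact ⟨d, hdD, s, hs, hds⟩

instance : PartialOrder (OO X) := Subtype.partialOrder _

instance : SupSet (OO X) :=
  ⟨fun s => ⟨⋃₀ (Subtype.val '' s),
    omegaScottOpen_sUnion (by rintro _ ⟨a, _, rfl⟩; exact a.2)⟩⟩

/-- `OO X`, ordered by inclusion, is a complete lattice (suprema are unions). -/
noncomputable instance : CompleteLattice (OO X) :=
  completeLatticeOfSup _ fun s => by
    constructor
    · intro a ha U hU
      exact ⟨a.1, ⟨a, ha, rfl⟩, hU⟩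
    · intro b hb U hU
      obtain ⟨_, ⟨a, ha, rfl⟩, hUa⟩ := hU
      exact hb ha hUa

end OO

/-- `e K` is the collection of open sets containing `K`. -/
def eOpens {X : Type*} [TopologicalSpace X] (K : Set X) : Set (Opens X) :=
  {U : Opens X | K ⊆ (U : Set X)}

lemma exists_upper_of_directedOn {L : Type*} [Preorder L] {D : Set L}
    (hne : D.Nonempty) (hdir : DirectedOn (· ≤ ·) D) (s : Finset L) (hs : ↑s ⊆ D) :
    ∃ d ∈ D, ∀ U ∈ s, U ≤ d := by
  classical
  induction s using Finset.induction_on with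
  | empty => exact ⟨hne.choose, hne.choose_spec, by simp⟩
  | @insert a t ha ih =>
      obtain ⟨d, hd, hdt⟩ := ih (fun x hx => hs (by simp [hx]))
      obtain ⟨e, he, hae, hde⟩ := hdir a (hs (by simp)) d hd
      refine ⟨e, he, ?_⟩
      intro U hU
      rcases Finset.mem_insert.1 hU with rfl | hU
      · exact hae
      · exact (hdt U hU).trans hde

/-- For a countably compact set `K`, the collection `e K` is ω-Scott open. -/
lemma omegaScottOpen_eOpens {X : Type*} [TopologicalSpace X] {K : Set X}
    (hK : CountablyCompactSet K) : OmegaScottOpen (eOpens K) := by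
  classical
  constructor
  · intro U V hU hUV x hx
    exact hUV (hU hx)
  · rintro D hne hcnt hdir hsup
    have hcover : K ⊆ ⋃₀ ((fun U : Opens X => (U : Set X)) '' D) := by
      intro x hx
      have hx' : x ∈ sSup D := hsup hx
      obtain ⟨U, hU, hxU⟩ := Opens.mem_sSup.1 hx'
      exact ⟨(U : Set X), mem_image_of_mem _ hU, hxU⟩
    obtain ⟨F, hFsub, hFfin, hKF⟩ := hK _ (hcnt.image _)
      (by rintro _ ⟨U, _, rfl⟩; exact U.2) hcover
    obtain ⟨F₀, hF₀D, hF₀⟩ := Set.subset_image_iff.mp hFsub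
    have hF₀fin : F₀.Finite :=
      Set.Finite.of_finite_image (hF₀.symm ▸ hFfin) SetLike.coe_injective.injOn
    obtain ⟨d, hd, hdub⟩ := exists_upper_of_directedOn hne hdir hF₀fin.toFinset
      (by simpa using hF₀D)
    refine ⟨d, hd, ?_⟩
    intro x hx
    obtain ⟨c, hcF, hxc⟩ := hKF hx
    rw [← hF₀] at hcF
    obtain ⟨U, hU, rfl⟩ := hcF
    exact hdub U (hF₀fin.mem_toFinset.2 hU) hxc

/-- A countable directed family of ω-Scott open collections covers `U` only if one of its members
contains `U`. -/
lemma omegaScottOpen_mem {X : Type*} [TopologicalSpace X] (U : Opens X) :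
    OmegaScottOpen {H : OO X | U ∈ H.1} := by
  constructor
  · intro G K hG hGK
    exact hGK hG
  · rintro D - - - hsup
    obtain ⟨_, ⟨a, ha, rfl⟩, hUa⟩ := hsup
    exact ⟨a, ha, hUa⟩

/-- A form of countable compactness: closed sets `C k` without a common point in `U` would make
the open sets `U \ C k` exhaust `U`, so that one of them would belong to `G`. -/
lemma exists_mem_of_frequently {X : Type*} [TopologicalSpace X] {G : Set (Opens X)}
    (hG : OmegaScottOpen G) {x : ℕ → X} (hx : ∀ U ∈ G, ∀ᶠ n in atTop, x n ∈ U)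
    {C : ℕ → Set X} (hC : ∀ k, IsClosed (C k)) (hanti : Antitone C)
    (hfreq : ∀ k, ∃ᶠ n in atTop, x n ∈ C k) {U : Opens X} (hU : U ∈ G) :
    ∃ y ∈ U, ∀ k, y ∈ C k := by
  by_contra! hcon
  let V : ℕ → Opens X := fun k => ⟨(U : Set X) \ C k, U.2.sdiff (hC k)⟩
  have hV : Monotone V := fun i j hij y hy => ⟨hy.1, fun h => hy.2 (hanti hij h)⟩
  have hle : U ≤ sSup (range V) := by
    intro y hy
    obtain ⟨k, hk⟩ := hcon y hy
    exact Opens.mem_sSup.2 ⟨V k, mem_range_self k, hy, hk⟩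
  obtain ⟨_, ⟨k, rfl⟩, hk⟩ := hG.2 (range V) (range_nonempty V) (countable_range V)
    (directedOn_range.2 hV.directed_le) (hG.1 hU hle)
  obtain ⟨n, hn, hn'⟩ := ((hfreq k).and_eventually (hx _ hk)).exists
  exact hn'.2 hn

lemma SeqHausdorff.eq_of_frequently {X : Type*} [TopologicalSpace X] (hX : SeqHausdorff X)
    {z : ℕ → X} {a b : X} (hz : Tendsto z atTop (nhds b)) (ha : ∃ᶠ n in atTop, z n = a) :
    a = b := by
  obtain ⟨φ, hφ, h⟩ := extraction_of_frequently_atTop ha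
  refine hX (z ∘ φ) a b ?_ (hz.comp hφ.tendsto_atTop)
  exact tendsto_const_nhds.congr fun n => (h n).symm

lemma SeqHausdorff.isClosed_singleton {X : Type*} [TopologicalSpace X] [SequentialSpace X]
    (hX : SeqHausdorff X) (a : X) : IsClosed ({a} : Set X) := by
  refine IsSeqClosed.isClosed fun z b hz hb => ?_
  exact (hX.eq_of_frequently hb (Frequently.of_forall hz)).symm

/-- A tail of `y`, enlarged by a closed set `F` containing all limits of subsequences of `y`, is
closed. -/
lemma isClosed_tail_union {X : Type*} [TopologicalSpace X] [SequentialSpace X]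
    (hX : SeqHausdorff X) {y : ℕ → X} {F : Set X} (hF : IsClosed F)
    (hy : ∀ (φ : ℕ → ℕ) (b : X), StrictMono φ → Tendsto (y ∘ φ) atTop (nhds b) → b ∈ F) (k : ℕ) :
    IsClosed (y '' Ici k ∪ F) := by
  refine IsSeqClosed.isClosed fun z b hz hb => ?_
  by_cases hzF : ∃ᶠ n in atTop, z n ∈ F
  · exact Or.inr (hF.mem_of_frequently_of_tendsto hzF hb)
  have hzy : ∀ᶠ n in atTop, ∃ m, k ≤ m ∧ y m = z n := by
    filter_upwards [not_frequently.1 hzF] with n hn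
    obtain ⟨m, hm, h⟩ := (hz n).resolve_right hn
    exact ⟨m, hm, h⟩
  obtain ⟨N, hN⟩ := eventually_atTop.1 hzy
  choose! m hkm hm using hN
  by_cases hbd : ∃ i, ∃ᶠ n in atTop, m n = i
  · -- A single index serves infinitely often, so `b` is the corresponding value of `y`.
    obtain ⟨i, hi⟩ := hbd
    have hi' := hi.and_eventually (eventually_ge_atTop N)
    obtain ⟨n, hn, hNn⟩ := hi'.exists
    refine Or.inl ⟨i, hn ▸ hkm n hNn, ?_⟩
    refine hX.eq_of_frequently hb (hi'.mono ?_)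
    rintro n ⟨rfl, hNn⟩
    exact (hm n hNn).symm
  · -- Each index serves finitely often, so a subsequence of `z` is a subsequence of `y`.
    have hmt : Tendsto m atTop atTop := by
      have h : Tendsto m atTop cofinite :=
        le_cofinite_iff_eventually_ne.2 fun i => not_frequently.1 fun h => hbd ⟨i, h⟩
      rwa [Nat.cofinite_eq_atTop] at h
    obtain ⟨φ, hφ, hmφ⟩ := strictMono_subseq_of_tendsto_atTop hmt
    refine Or.inr (hy (m ∘ φ) b hmφ ((hb.comp hφ.tendsto_atTop).congr' ?_))
    filter_upwards [hφ.tendsto_atTop.eventually_ge_atTop N] with n hn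
    exact (hm _ hn).symm

/-- In a sequentially Hausdorff sequential space `X`: if nonempty ω-Scott open
collections `Hₙ → H∞` in the ω-Scott topology on `O(O(X))` and `xₙ ∈ ⋂ Hₙ` for all `n`, then
`(xₙ)` has a subsequence converging to some `x∞ ∈ ⋂ H∞`. -/
theorem statement13 {X : Type*} [TopologicalSpace X] [SequentialSpace X]
    (hX : SeqHausdorff X) (H : ℕ → OO X) (Hinf : OO X)
    (hne : ∀ n : ℕ, (H n).1.Nonempty) (hneinf : Hinf.1.Nonempty)
    (hH : Tendsto H atTop (@nhds (OO X) (omegaScottTopology (OO X)) Hinf))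
    (x : ℕ → X) (hx : ∀ n : ℕ, x n ∈ ⋂ U ∈ (H n).1, (U : Set X)) :
    ∃ (φ : ℕ → ℕ) (xinf : X), StrictMono φ ∧ (xinf ∈ ⋂ U ∈ Hinf.1, (U : Set X)) ∧
      Tendsto (x ∘ φ) atTop (nhds xinf) := by
  have hev : ∀ U ∈ Hinf.1, ∀ᶠ n in atTop, x n ∈ U := by
    intro U hU
    have hmem : {G : OO X | U ∈ G.1} ∈ @nhds (OO X) (omegaScottTopology (OO X)) Hinf :=
      @IsOpen.mem_nhds (OO X) (omegaScottTopology (OO X)) Hinf _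
        (isOpen_generateFrom_of_mem (omegaScottOpen_mem U)) hU
    filter_upwards [hH hmem] with n hn
    exact mem_iInter₂.1 (hx n) U hn
  have hconv : ∃ (φ : ℕ → ℕ) (b : X), StrictMono φ ∧ Tendsto (x ∘ φ) atTop (nhds b) := by
    by_contra! hcon
    obtain ⟨U, hU⟩ := hneinf
    obtain ⟨b, -, hb⟩ := exists_mem_of_frequently Hinf.2 hev
      (isClosed_tail_union hX isClosed_empty fun φ b hφ h => (hcon φ b hφ h).elim)
      (fun i j hij => union_subset_union_left _ (image_mono (Ici_subset_Ici.2 hij)))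
      (fun k => ((eventually_ge_atTop k).mono fun n hn => Or.inl ⟨n, hn, rfl⟩).frequently) hU
    have hfreq : ∃ᶠ n in atTop, x n = b := frequently_atTop.2 fun k => by
      obtain ⟨n, hn, h⟩ := (hb k).resolve_right id
      exact ⟨n, hn, h⟩
    obtain ⟨φ, hφ, h⟩ := extraction_of_frequently_atTop hfreq
    exact hcon φ b hφ (tendsto_const_nhds.congr fun n => (h n).symm)
  obtain ⟨φ, b, hφ, hb⟩ := hconv
  refine ⟨φ, b, hφ, mem_iInter₂.2 fun U hU => ?_, hb⟩
  by_contra hbU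
  obtain ⟨c, hcU, hc⟩ := exists_mem_of_frequently Hinf.2
    (fun V hV => hφ.tendsto_atTop.eventually (hev V hV))
    (isClosed_tail_union (y := x ∘ φ) hX (hX.isClosed_singleton b) fun ψ d hψ h =>
      hX _ d b h (hb.comp hψ.tendsto_atTop))
    (fun i j hij => union_subset_union_left _ (image_mono (Ici_subset_Ici.2 hij)))
    (fun k => ((eventually_ge_atTop k).mono fun n hn => Or.inl ⟨n, hn, rfl⟩).frequently) hU
  have hcb : c ≠ b := fun h => hbU (h ▸ hcU)
  refine hcb (hX.eq_of_frequently hb (frequently_atTop.2 fun k => ?_))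
  obtain ⟨n, hn, h⟩ := (hc k).resolve_right hcb
  exact ⟨n, hn, h⟩
end

section
/- Let X be a sequential topological space that is sequentially Hausdorff. Then for every nonempty ω-Scott open set H ⊆ O(X), the intersection ⋂H is both sequentially compact (every sequence in ⋂H has a subsequence converging to a point of ⋂H) and countably compact. -/
/-!
Let `K = ⋂ H` and let `x` be a sequence in `K`. If `S` is a closed set containing all limits of
subsequences of `x`, then uniqueness of limits and sequentiality of `X` make each set
`S ∪ {xₙ | n ≥ k}` closed (`isClosed_union_tail`). If moreover `S` misses some `U ∈ H`, the open
sets `U \ (S ∪ {xₙ | n ≥ k})` increase to `U`, because a point of `U` repeated infinitely often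
by `x` would be a limit of a subsequence and so lie in `S`. As `H` is ω-Scott open, one of them
belongs to `H` and therefore contains `K`, although it omits `x k`
(`false_of_subseq_limits_mem`).

Taking `S = ∅` shows that some subsequence converges in `X`; applying the same argument to that
subsequence with `S = {y}`, where `y` is its limit, shows `y ∈ K`. Hence `K` is sequentially
compact, and sequential compactness implies countable compactness.
-/

open TopologicalSpace Filter Set

/-- If a sequence in a sequentially Hausdorff space is frequently equal to `c` and converges to
`z`, then `c = z`. -/
lemma SeqHausdorff.eq_of_frequently_eq {X : Type*} [TopologicalSpace X] (hX : SeqHausdorff X)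
    {u : ℕ → X} {c z : X} (hu : Tendsto u atTop (nhds z)) (hc : ∃ᶠ m in atTop, u m = c) :
    c = z := by
  obtain ⟨φ, hφ, hφc⟩ := extraction_of_frequently_atTop hc
  have h := hu.comp hφ.tendsto_atTop
  exact hX _ c z (tendsto_const_nhds.congr fun n => (hφc n).symm) h

/-- If a closed set `S` contains every limit of a subsequence of `x`, then adjoining a tail of `x`
to `S` gives a closed set. -/
lemma isClosed_union_tail {X : Type*} [TopologicalSpace X] [SequentialSpace X]
    (hX : SeqHausdorff X) {x : ℕ → X} {S : Set X} (hS : IsClosed S)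
    (hlim : ∀ (z : X) (φ : ℕ → ℕ), StrictMono φ → Tendsto (x ∘ φ) atTop (nhds z) → z ∈ S)
    (k : ℕ) : IsClosed (S ∪ x '' Ici k) := by
  apply IsSeqClosed.isClosed
  intro u z hu huz
  by_cases hf : ∃ᶠ m in atTop, u m ∈ S
  · exact Or.inl (hS.mem_of_frequently_of_tendsto hf huz)
  rw [not_frequently] at hf
  obtain ⟨N, hN⟩ := eventually_atTop.1 hf
  have hex : ∀ m, ∃ i, k ≤ i ∧ x i = u (m + N) := fun m =>
    ((hu (m + N)).resolve_left (hN _ (Nat.le_add_left N m)))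
  choose n hkn hn using hex
  have huz' : Tendsto (x ∘ n) atTop (nhds z) :=
    (huz.comp (tendsto_add_atTop_nat N)).congr fun m => (hn m).symm
  -- Either the indices `n m` tend to infinity, or some index is hit infinitely often.
  by_cases ht : Tendsto n atTop atTop
  · obtain ⟨φ, hφ, hnφ⟩ := strictMono_subseq_of_tendsto_atTop ht
    exact Or.inl (hlim z (n ∘ φ) hnφ (huz'.comp hφ.tendsto_atTop))
  · obtain ⟨c, hc⟩ : ∃ c, ¬ ∀ᶠ i in map n atTop, i ≠ c := by
      by_contra! h
      exact ht ((le_cofinite_iff_eventually_ne.2 h).trans_eq Nat.cofinite_eq_atTop)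
    have hc' : ∃ᶠ m in atTop, n m = c := fun h => hc (eventually_map.2 h)
    obtain ⟨m, hm⟩ := hc'.exists
    have : x c = z := hX.eq_of_frequently_eq huz' (hc'.mono fun m hm => by simp [hm])
    exact Or.inr ⟨c, hm ▸ hkn m, this⟩

/-- The limits of subsequences of a sequence in `⋂ H` cannot all lie in a closed set missing
some `U ∈ H`: otherwise the open sets `U \ (S ∪ {xₙ | n ≥ k})` increase to `U`, so one of
them is in `H` and hence contains `x k`. -/
lemma false_of_subseq_limits_mem {X : Type*} [TopologicalSpace X] [SequentialSpace X]
    (hX : SeqHausdorff X) {H : Set (Opens X)} (hH : OmegaScottOpen H) {x : ℕ → X}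
    (hx : ∀ n, x n ∈ ⋂ U ∈ H, (U : Set X)) {S : Set X} (hS : IsClosed S)
    (hlim : ∀ (z : X) (φ : ℕ → ℕ), StrictMono φ → Tendsto (x ∘ φ) atTop (nhds z) → z ∈ S)
    {U : Opens X} (hU : U ∈ H) (hUS : Disjoint (U : Set X) S) : False := by
  let V : ℕ → Opens X := fun k =>
    ⟨(U : Set X) \ (S ∪ x '' Ici k), U.2.sdiff (isClosed_union_tail hX hS hlim k)⟩
  have hmono : Monotone V := by
    intro k l hkl p hp
    refine ⟨hp.1, fun h => hp.2 ?_⟩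
    exact union_subset_union_right S (image_mono (Ici_subset_Ici.2 hkl)) h
  have hsup : U ≤ sSup (range V) := by
    intro p hp
    by_contra hcon
    have hpS : p ∉ S := fun h => disjoint_left.1 hUS hp h
    have hfr : ∃ᶠ n in atTop, x n = p := by
      rw [frequently_atTop]
      intro k
      by_contra hk
      refine hcon (Opens.mem_sSup.2 ⟨V k, mem_range_self k, hp, ?_⟩)
      rintro (h | ⟨i, hi, hip⟩)
      · exact hpS h
      · exact hk ⟨i, hi, hip⟩
    obtain ⟨φ, hφ, hφp⟩ := extraction_of_frequently_atTop hfr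
    exact hpS (hlim p φ hφ (tendsto_const_nhds.congr fun n => (hφp n).symm))
  obtain ⟨_, ⟨k, rfl⟩, hk⟩ := hH.2 (range V) (range_nonempty V) (countable_range V)
    (directedOn_range.2 hmono.directed_le) (hH.1 hU hsup)
  have hxk : x k ∈ (V k : Set X) := mem_iInter₂.1 (hx k) (V k) hk
  exact hxk.2 (Or.inr ⟨k, self_mem_Ici, rfl⟩)

lemma isSeqCompact_iInter {X : Type*} [TopologicalSpace X] [SequentialSpace X]
    (hX : SeqHausdorff X) {H : Set (Opens X)} (hH : OmegaScottOpen H) (hne : H.Nonempty) :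
    IsSeqCompact (⋂ U ∈ H, (U : Set X)) := by
  intro x hx
  by_cases hconv : ∃ (y : X) (φ : ℕ → ℕ), StrictMono φ ∧ Tendsto (x ∘ φ) atTop (nhds y)
  · obtain ⟨y, φ, hφ, hy⟩ := hconv
    refine ⟨y, ?_, φ, hφ, hy⟩
    by_contra hyK
    simp only [mem_iInter, not_forall] at hyK
    obtain ⟨U, hU, hyU⟩ := hyK
    have hclosed : IsClosed ({y} : Set X) := by
      apply IsSeqClosed.isClosed
      intro u z hu huz
      exact (hX.eq_of_frequently_eq huz (Frequently.of_forall hu)).symm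
    refine false_of_subseq_limits_mem hX hH (x := x ∘ φ) (fun n => hx (φ n)) hclosed
      (fun z ψ hψ hz => ?_) hU (disjoint_singleton_right.2 hyU)
    exact hX _ z y hz (hy.comp hψ.tendsto_atTop)
  · obtain ⟨U, hU⟩ := hne
    exact (false_of_subseq_limits_mem hX hH hx isClosed_empty
      (fun z φ hφ hz => hconv ⟨z, φ, hφ, hz⟩) hU (disjoint_empty _)).elim

lemma IsSeqCompact.countablyCompactSet {X : Type*} [TopologicalSpace X] {K : Set X}
    (hK : IsSeqCompact K) : CountablyCompactSet K := by
  intro C hC hopen hcov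
  rcases C.eq_empty_or_nonempty with rfl | hCne
  · exact ⟨∅, Subset.rfl, finite_empty, hcov⟩
  obtain ⟨c, rfl⟩ := hC.exists_eq_range hCne
  by_contra hcon
  have hex : ∀ n : ℕ, ∃ p ∈ K, ∀ i ≤ n, p ∉ c i := by
    intro n
    by_contra h
    push Not at h
    refine hcon ⟨c '' Iic n, image_subset_range _ _, (finite_Iic n).image c, fun p hp => ?_⟩
    obtain ⟨i, hi, hpi⟩ := h p hp
    exact ⟨c i, ⟨i, hi, rfl⟩, hpi⟩
  choose x hxK hxc using hex
  obtain ⟨a, haK, φ, hφ, ha⟩ := hK hxK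
  obtain ⟨_, ⟨j, rfl⟩, haj⟩ := hcov haK
  have h1 := ha.eventually ((hopen _ (mem_range_self j)).mem_nhds haj)
  obtain ⟨m, hm, hjm⟩ := (h1.and (eventually_ge_atTop j)).exists
  exact hxc (φ m) j (hjm.trans (hφ.id_le m)) hm

/-- In a sequentially Hausdorff sequential space, the intersection of any
nonempty ω-Scott open collection of opens is sequentially compact and countably compact. -/
theorem statement14 {X : Type*} [TopologicalSpace X] [SequentialSpace X]
    (hX : SeqHausdorff X) (H : Set (Opens X)) (hH : OmegaScottOpen H) (hne : H.Nonempty) :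
    IsSeqCompact (⋂ U ∈ H, (U : Set X)) ∧ CountablyCompactSet (⋂ U ∈ H, (U : Set X)) := by
  have hK := isSeqCompact_iInter hX hH hne
  exact ⟨hK, hK.countablyCompactSet⟩
end
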